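/- arXiv:1705.06213 — 2 statements merged into one kernel-verified Lean document; each statement's English description precedes it below -/
import Mathlib

section
/- Let G be a group generated by a finite set Σ, acting without edge inversions on a simplicial tree T, and suppose no vertex of T is fixed by every element of G. Then there exists a hyperbolic element h ∈ G of word length at most 2 with respect to Σ; more precisely, either some element of Σ is hyperbolic, or there exist elliptic elements s1, s2 ∈ Σ with Fix(s1) ∩ Fix(s2) = ∅, in which case h = s1·s2 is hyperbolic. -/
open SimpleGraph Pointwise

section TreeDefs

variable {G : Type*} [Group G]

/-- The action of `G` on the vertices preserves adjacency. -/
def ActsByAut (G : Type*) [Group G] {V : Type*} [MulAction G V] (T : SimpleGraph V) : Prop :=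
  ∀ (g : G) (v w : V), T.Adj v w → T.Adj (g • v) (g • w)

/-- The action has no edge inversions: no element swaps the endpoints of an edge. -/
def NoEdgeInversion (G : Type*) [Group G] {V : Type*} [MulAction G V] (T : SimpleGraph V) : Prop :=
  ∀ (g : G) (v w : V), T.Adj v w → ¬(g • v = w ∧ g • w = v)

/-- The set of vertices fixed by `g`. -/
def Fixed (V : Type*) [MulAction G V] (g : G) : Set V := {v | g • v = v}

/-- `g` is elliptic: it fixes some vertex. -/
def IsElliptic (V : Type*) [MulAction G V] (g : G) : Prop := ∃ v : V, g • v = v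

/-- `g` is hyperbolic: it fixes no vertex. -/
def IsHyperbolic (V : Type*) [MulAction G V] (g : G) : Prop := ¬ ∃ v : V, g • v = v

/-- Translation length of `g`: the infimum of `d(v, g • v)` over all vertices `v`. -/
noncomputable def transLen {V : Type*} [MulAction G V] (T : SimpleGraph V) (g : G) : ℕ :=
  ⨅ v : V, T.dist v (g • v)

/-- The axis of a (hyperbolic) element: the vertices moved exactly the translation length. -/
noncomputable def Axis {V : Type*} [MulAction G V] (T : SimpleGraph V) (g : G) : Set V :=
  {v | T.dist v (g • v) = transLen T g}

/-- Diameter (in `ℕ∞`) of a set of vertices: the sup of pairwise simplicial distances. -/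
noncomputable def setDiam {V : Type*} (T : SimpleGraph V) (S : Set V) : ℕ∞ :=
  ⨆ v ∈ S, ⨆ w ∈ S, (T.dist v w : ℕ∞)

/-- Minimal simplicial distance between two sets of vertices. -/
noncomputable def setDist {V : Type*} (T : SimpleGraph V) (A B : Set V) : ℕ :=
  sInf {n : ℕ | ∃ v ∈ A, ∃ w ∈ B, T.dist v w = n}

/-- The action of `G` on `T` is `k`-acylindrical: the fixed-point set of every nontrivial
elliptic element has diameter at most `k`. -/
def AcylindricalAction {V : Type*} (T : SimpleGraph V) (G : Type*) [Group G] [MulAction G V]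
    (k : ℕ) : Prop :=
  ∀ g : G, g ≠ 1 → IsElliptic V g → setDiam T (Fixed V g) ≤ (k : ℕ∞)

/-- `a` and `b` generate a rank 2 free product in `G`: the canonical homomorphism
`⟨a⟩ ∗ ⟨b⟩ → G` from the free product of the cyclic subgroups generated by `a` and `b`
is injective. -/
def IsRank2FreeProduct {G : Type*} [Group G] (a b : G) : Prop :=
  Function.Injective
    (Monoid.Coprod.lift (Subgroup.zpowers a).subtype (Subgroup.zpowers b).subtype)

/-- `a` and `b` freely generate a rank 2 free subgroup of `G`: the homomorphism from the
free group on two generators sending the generators to `a` and `b` is injective. -/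
def FreelyGeneratesFreeSubgroup {G : Type*} [Group G] (a b : G) : Prop :=
  Function.Injective ((FreeGroup.lift (fun i : Bool => if i then a else b)) : FreeGroup Bool →* G)

/-- `a` and `b` freely generate a rank 2 free subsemigroup of `G`: the monoid homomorphism
from the free monoid on two generators sending the generators to `a` and `b` is injective. -/
def FreelyGeneratesFreeSubsemigroup {G : Type*} [Monoid G] (a b : G) : Prop :=
  Function.Injective ((FreeMonoid.lift (fun i : Bool => if i then a else b)) : FreeMonoid Bool →* G)

/-- A line in a simplicial tree: the image of an isometric embedding of `ℤ`. -/
def IsLine {V : Type*} (T : SimpleGraph V) (L : Set V) : Prop :=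
  ∃ f : ℤ → V, (∀ m n : ℤ, T.dist (f m) (f n) = (m - n).natAbs) ∧ L = Set.range f

end TreeDefs

/-!
Fixed-point sets of tree automorphisms are convex, and convex subtrees have the Helly property
because any three vertices of a tree have a median. So if the fixed-point sets of the generators
met pairwise, they would have a common vertex, which would be fixed by all of `G`. Hence two
generators have disjoint fixed-point sets. When both are elliptic, their product `s1 * s2` fixes
no vertex `v`: an elliptic `s2` fixes the midpoint of `v` and `s2 • v`, and if `s1` takes `s2 • v`
back to `v` it fixes the same midpoint.
-/

section Geodesics

variable {V : Type*} {T : SimpleGraph V} {a b c m m' x : V}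

/-- The geodesic interval `[a, b]` of a graph: the vertices `x` for which the triangle inequality
`d(a, b) ≤ d(a, x) + d(x, b)` is an equality. In a connected graph these are the vertices on some
geodesic from `a` to `b`. -/
def geodesicInterval (T : SimpleGraph V) (a b : V) : Set V :=
  {x | T.dist a x + T.dist x b = T.dist a b}

theorem mem_geodesicInterval : x ∈ geodesicInterval T a b ↔ T.dist a x + T.dist x b = T.dist a b :=
  Iff.rfl

theorem left_mem_geodesicInterval (T : SimpleGraph V) (a b : V) : a ∈ geodesicInterval T a b := by
  simp [mem_geodesicInterval]

theorem geodesicInterval_comm (T : SimpleGraph V) (a b : V) :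
    geodesicInterval T a b = geodesicInterval T b a := by
  ext x
  rw [mem_geodesicInterval, mem_geodesicInterval, T.dist_comm (u := b) (v := x),
    T.dist_comm (u := x) (v := a), T.dist_comm (u := b) (v := a), add_comm]

theorem geodesicInterval_subset_of_mem (hT : T.Connected) (hx : x ∈ geodesicInterval T a b) :
    geodesicInterval T x b ⊆ geodesicInterval T a b := by
  intro y hy
  have hay : T.dist a y ≤ T.dist a x + T.dist x y := hT.dist_triangle
  have hab : T.dist a b ≤ T.dist a y + T.dist y b := hT.dist_triangle
  rw [mem_geodesicInterval] at *
  omega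

theorem mem_geodesicInterval_of_mem_support (hT : T.Connected) {p : T.Walk a b}
    (hp : p.length = T.dist a b) (hx : x ∈ p.support) : x ∈ geodesicInterval T a b := by
  obtain ⟨q, r, rfl⟩ := Walk.mem_support_iff_exists_append.1 hx
  have hax := T.dist_le q
  have hxb := T.dist_le r
  have hab : T.dist a b ≤ T.dist a x + T.dist x b := hT.dist_triangle
  rw [Walk.length_append] at hp
  rw [mem_geodesicInterval]
  omega

theorem isPath_append {p : T.Walk a b} {q : T.Walk b c} (hp : p.IsPath) (hq : q.IsPath)
    (hpq : ∀ x ∈ p.support, x ∈ q.support → x = b) : (p.append q).IsPath := by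
  have hb : b ∉ q.support.tail := by
    have hnodup := hq.support_nodup
    rw [← Walk.cons_tail_support, List.nodup_cons] at hnodup
    exact hnodup.1
  rw [Walk.isPath_def, Walk.support_append, List.nodup_append']
  refine ⟨hp.support_nodup, hq.support_nodup.tail, fun x hxp hxq => hb ?_⟩
  exact hpq x hxp (List.mem_of_mem_tail hxq) ▸ hxq

theorem length_eq_dist_of_isPath (hT : T.IsAcyclic) {p : T.Walk a b} (hp : p.IsPath) :
    p.length = T.dist a b := by
  obtain ⟨q, hq, hqdist⟩ := p.reachable.exists_path_of_dist
  have hpq : p = q := congrArg Subtype.val ((hT.subsingleton_path a b).elim ⟨p, hp⟩ ⟨q, hq⟩)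
  rw [hpq, hqdist]

theorem eq_of_mem_geodesicInterval_of_dist_eq (hT : T.IsTree) (hm : m ∈ geodesicInterval T a b)
    (hm' : m' ∈ geodesicInterval T a b) (hdist : T.dist a m = T.dist a m') : m = m' := by
  have exists_path_getVert : ∀ x ∈ geodesicInterval T a b,
      ∃ p : T.Walk a b, p.IsPath ∧ p.getVert (T.dist a x) = x := by
    intro x hx
    obtain ⟨p, hp⟩ := hT.connected.exists_walk_length_eq_dist a x
    obtain ⟨q, hq⟩ := hT.connected.exists_walk_length_eq_dist x b
    refine ⟨p.append q, Walk.isPath_of_length_eq_dist _ ?_, ?_⟩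
    · rw [Walk.length_append, hp, hq, hx]
    · simp [Walk.getVert_append, hp]
  obtain ⟨p, hp, hpm⟩ := exists_path_getVert m hm
  obtain ⟨q, hq, hqm'⟩ := exists_path_getVert m' hm'
  rw [← hpm, ← hqm', (hT.existsUnique_path a b).unique hp hq, hdist]

theorem mem_geodesicInterval_of_forall_dist_le (hT : T.IsTree)
    (hm : ∀ x ∈ geodesicInterval T m b, T.dist a m ≤ T.dist a x) :
    m ∈ geodesicInterval T a b := by
  obtain ⟨p, hp, hpdist⟩ := hT.connected.exists_path_of_dist a m
  obtain ⟨q, hq, hqdist⟩ := hT.connected.exists_path_of_dist m b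
  have hpq : ∀ x ∈ p.support, x ∈ q.support → x = m := by
    intro x hxp hxq
    have hax := mem_geodesicInterval_of_mem_support hT.connected hpdist hxp
    have hle := hm x (mem_geodesicInterval_of_mem_support hT.connected hqdist hxq)
    rw [mem_geodesicInterval] at hax
    exact hT.connected.dist_eq_zero_iff.1 (by omega)
  have hlength := length_eq_dist_of_isPath hT.isAcyclic (isPath_append hp hq hpq)
  rwa [Walk.length_append, hpdist, hqdist] at hlength

theorem exists_median (hT : T.IsTree) (a b c : V) :
    ∃ m, m ∈ geodesicInterval T a b ∧ m ∈ geodesicInterval T a c ∧ m ∈ geodesicInterval T b c := by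
  -- The median is the projection of `a` to `[b, c]`.
  obtain ⟨m, hm, hmin⟩ := exists_minimalFor_of_wellFoundedLT (· ∈ geodesicInterval T b c)
    (T.dist a) ⟨b, left_mem_geodesicInterval T b c⟩
  have hnearest : ∀ x ∈ geodesicInterval T b c, T.dist a m ≤ T.dist a x := fun x hx =>
    (le_total _ _).elim id (hmin hx)
  refine ⟨m, mem_geodesicInterval_of_forall_dist_le hT fun x hx => hnearest x ?_,
    mem_geodesicInterval_of_forall_dist_le hT fun x hx => hnearest x ?_, hm⟩
  · rw [geodesicInterval_comm] at hm ⊢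
    exact geodesicInterval_subset_of_mem hT.connected hm hx
  · exact geodesicInterval_subset_of_mem hT.connected hm hx

end Geodesics

section Convexity

variable {V : Type*} {T : SimpleGraph V}

/-- A set of vertices is geodesically convex if it contains the geodesic interval between any two
of its elements. In a tree, the nonempty convex sets are the vertex sets of subtrees. -/
def GeodesicallyConvex (T : SimpleGraph V) (C : Set V) : Prop :=
  ∀ a ∈ C, ∀ b ∈ C, geodesicInterval T a b ⊆ C

theorem GeodesicallyConvex.inter {A B : Set V} (hA : GeodesicallyConvex T A)
    (hB : GeodesicallyConvex T B) : GeodesicallyConvex T (A ∩ B) :=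
  fun a ha b hb => Set.subset_inter (hA a ha.1 b hb.1) (hB a ha.2 b hb.2)

theorem GeodesicallyConvex.inter_inter_nonempty (hT : T.IsTree) {A B C : Set V}
    (hA : GeodesicallyConvex T A) (hB : GeodesicallyConvex T B) (hC : GeodesicallyConvex T C)
    (hAB : (A ∩ B).Nonempty) (hAC : (A ∩ C).Nonempty) (hBC : (B ∩ C).Nonempty) :
    (A ∩ B ∩ C).Nonempty := by
  obtain ⟨x, hxA, hxB⟩ := hAB
  obtain ⟨y, hyA, hyC⟩ := hAC
  obtain ⟨z, hzB, hzC⟩ := hBC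
  obtain ⟨m, hxy, hxz, hyz⟩ := exists_median hT x y z
  exact ⟨m, ⟨hA x hxA y hyA hxy, hB x hxB z hzB hxz⟩, hC y hyC z hzC hyz⟩

theorem helly_of_geodesicallyConvex {ι : Type*} (hT : T.IsTree) (s : Finset ι) (F : ι → Set V)
    (hconvex : ∀ i ∈ s, GeodesicallyConvex T (F i))
    (hmeet : ∀ i ∈ s, ∀ j ∈ s, (F i ∩ F j).Nonempty) : (⋂ i ∈ s, F i).Nonempty := by
  rcases s.eq_empty_or_nonempty with rfl | hs
  · have := hT.connected.nonempty
    simp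
  induction hs using Finset.Nonempty.cons_induction generalizing F with
  | singleton i => simpa using hmeet i
  | cons i s _ hs ih =>
    simp only [Finset.forall_mem_cons] at hconvex hmeet
    obtain ⟨hi, hconvex⟩ := hconvex
    obtain ⟨⟨-, hmeet_left⟩, hmeet⟩ := hmeet
    obtain ⟨x, hx⟩ := ih (fun j => F i ∩ F j) (fun j hj => hi.inter (hconvex j hj)) <| by
      intro j hj k hk
      rw [← Set.inter_inter_distrib_left, ← Set.inter_assoc]
      exact hi.inter_inter_nonempty hT (hconvex j hj) (hconvex k hk) (hmeet_left j hj)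
        (hmeet_left k hk) ((hmeet j hj).2 k hk)
    simp only [Set.mem_iInter₂] at hx
    obtain ⟨j, hj⟩ := hs
    exact ⟨x, by simpa using ⟨(hx j hj).1, fun k hk => (hx k hk).2⟩⟩

end Convexity

section Midpoints

variable {V : Type*} {T : SimpleGraph V} {a b m m' : V}

/-- `m` is the midpoint of the vertices `a` and `b`: it lies on a geodesic between them, at equal
distance from both. -/
def IsGeodesicMidpoint (T : SimpleGraph V) (a b m : V) : Prop :=
  m ∈ geodesicInterval T a b ∧ T.dist a m = T.dist m b

theorem IsGeodesicMidpoint.symm (h : IsGeodesicMidpoint T a b m) : IsGeodesicMidpoint T b a m :=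
  ⟨geodesicInterval_comm T a b ▸ h.1, by rw [dist_comm, ← h.2, dist_comm]⟩

theorem IsGeodesicMidpoint.unique (hT : T.IsTree) (h : IsGeodesicMidpoint T a b m)
    (h' : IsGeodesicMidpoint T a b m') : m = m' := by
  obtain ⟨hm, hdist⟩ := h
  obtain ⟨hm', hdist'⟩ := h'
  refine eq_of_mem_geodesicInterval_of_dist_eq hT hm hm' ?_
  rw [mem_geodesicInterval] at hm hm'
  omega

end Midpoints

section Actions

theorem dist_iso_apply {V W : Type*} {T : SimpleGraph V} {T' : SimpleGraph W} (e : T ≃g T')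
    (a b : V) : T'.dist (e a) (e b) = T.dist a b := by
  rw [dist_eq_sInf, dist_eq_sInf]
  congr 1
  ext n
  constructor
  · rintro ⟨p, rfl⟩
    exact ⟨(p.map e.symm.toHom).copy (e.symm_apply_apply a) (e.symm_apply_apply b), by simp⟩
  · rintro ⟨p, rfl⟩
    exact ⟨p.map e.toHom, by simp⟩

variable {G V : Type*} [Group G] [MulAction G V] {T : SimpleGraph V} {g h : G}

/-- The automorphism of the graph `T` by which `g` acts on its vertices. -/
def ActsByAut.toIso (hAct : ActsByAut G T) (g : G) : T ≃g T where
  toEquiv := MulAction.toPerm g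
  map_rel_iff' {v w} := ⟨fun hadj => by simpa using hAct g⁻¹ _ _ hadj, hAct g v w⟩

theorem ActsByAut.dist_smul (hAct : ActsByAut G T) (g : G) (a b : V) :
    T.dist (g • a) (g • b) = T.dist a b :=
  dist_iso_apply (hAct.toIso g) a b

theorem ActsByAut.smul_mem_geodesicInterval (hAct : ActsByAut G T) (g : G) {a b x : V}
    (hx : x ∈ geodesicInterval T a b) : g • x ∈ geodesicInterval T (g • a) (g • b) := by
  rwa [mem_geodesicInterval, hAct.dist_smul, hAct.dist_smul, hAct.dist_smul]

theorem geodesicallyConvex_fixed (hT : T.IsTree) (hAct : ActsByAut G T) (g : G) :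
    GeodesicallyConvex T (Fixed V g) := by
  intro a (ha : g • a = a) b (hb : g • b = b) x hx
  have hgx := hAct.smul_mem_geodesicInterval g hx
  have hdist := hAct.dist_smul g a x
  rw [ha] at hgx hdist
  rw [hb] at hgx
  exact eq_of_mem_geodesicInterval_of_dist_eq hT hgx hx hdist

theorem IsElliptic.exists_isGeodesicMidpoint (hT : T.IsTree) (hAct : ActsByAut G T)
    (hg : IsElliptic V g) (v : V) : ∃ m ∈ Fixed V g, IsGeodesicMidpoint T v (g • v) m := by
  obtain ⟨p, hp⟩ := hg
  -- `[p, v]` and `[p, g • v] = g • [p, v]` agree up to the median, so `g` fixes it.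
  obtain ⟨m, hpv, hpgv, hvgv⟩ := exists_median hT p v (g • v)
  have hgm := hAct.smul_mem_geodesicInterval g hpv
  have hdist := hAct.dist_smul g p m
  rw [hp] at hgm hdist
  have hfix : g • m = m := eq_of_mem_geodesicInterval_of_dist_eq hT hgm hpgv hdist
  refine ⟨m, hfix, hvgv, ?_⟩
  rw [← hAct.dist_smul g v m, hfix, dist_comm]

theorem fixed_inter_fixed_nonempty_of_isElliptic_mul (hT : T.IsTree) (hAct : ActsByAut G T)
    (hg : IsElliptic V g) (hh : IsElliptic V h) (hgh : IsElliptic V (g * h)) :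
    (Fixed V g ∩ Fixed V h).Nonempty := by
  obtain ⟨v, hv⟩ := hgh
  rw [mul_smul] at hv
  obtain ⟨m, hm, hmid⟩ := hh.exists_isGeodesicMidpoint hT hAct v
  obtain ⟨m', hm', hmid'⟩ := hg.exists_isGeodesicMidpoint hT hAct (h • v)
  rw [hv] at hmid'
  exact ⟨m, hmid.unique hT hmid'.symm ▸ hm', hm⟩

theorem forall_smul_eq_of_closure_eq_top {S : Set G} (hgen : Subgroup.closure S = ⊤) {v : V}
    (hv : ∀ s ∈ S, s • v = v) (g : G) : g • v = v := by
  have hle : Subgroup.closure S ≤ MulAction.stabilizer G v := (Subgroup.closure_le _).2 hv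
  exact hle (hgen ▸ Subgroup.mem_top g)

theorem exists_forall_smul_eq_of_fixed_inter_nonempty (hT : T.IsTree) (hAct : ActsByAut G T)
    {S : Finset G} (hgen : Subgroup.closure (S : Set G) = ⊤)
    (hmeet : ∀ s ∈ S, ∀ t ∈ S, (Fixed V s ∩ Fixed V t).Nonempty) :
    ∃ v : V, ∀ g : G, g • v = v := by
  obtain ⟨v, hv⟩ := helly_of_geodesicallyConvex hT S (Fixed V)
    (fun s _ => geodesicallyConvex_fixed hT hAct s) hmeet
  rw [Set.mem_iInter₂] at hv
  exact ⟨v, forall_smul_eq_of_closure_eq_top hgen hv⟩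

end Actions

-- An edge inversion fixes no vertex, so here it counts as `IsHyperbolic`.
theorem statement8_general {G V : Type*} [Group G] [MulAction G V] (T : SimpleGraph V)
    (hT : T.IsTree) (hAct : ActsByAut G T)
    (S : Finset G) (hgen : Subgroup.closure (S : Set G) = ⊤)
    (hnofix : ¬ ∃ v : V, ∀ g : G, g • v = v) :
    (∃ s ∈ S, IsHyperbolic V s) ∨
      (∃ s1 ∈ S, ∃ s2 ∈ S, IsElliptic V s1 ∧ IsElliptic V s2 ∧
        Fixed V s1 ∩ Fixed V s2 = (∅ : Set V) ∧ IsHyperbolic V (s1 * s2)) := by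
  obtain ⟨s1, hs1, s2, hs2, hdisjoint⟩ :
      ∃ s1 ∈ S, ∃ s2 ∈ S, Fixed V s1 ∩ Fixed V s2 = (∅ : Set V) := by
    by_contra! hmeet
    exact hnofix (exists_forall_smul_eq_of_fixed_inter_nonempty hT hAct hgen hmeet)
  by_cases h1 : IsElliptic V s1
  · by_cases h2 : IsElliptic V s2
    · have hmul : IsHyperbolic V (s1 * s2) := fun h12 =>
        (fixed_inter_fixed_nonempty_of_isElliptic_mul hT hAct h1 h2 h12).ne_empty hdisjoint
      exact Or.inr ⟨s1, hs1, s2, hs2, h1, h2, hdisjoint, hmul⟩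
    · exact Or.inl ⟨s2, hs2, h2⟩
  · exact Or.inl ⟨s1, hs1, h1⟩

/-- If `G` is generated by a finite set `Σ` and acts without edge
inversions on a simplicial tree with no global fixed vertex, then there is a hyperbolic
element of word length at most `2`: either some `s ∈ Σ` is hyperbolic, or there are
elliptic `s1, s2 ∈ Σ` with disjoint fixed-point sets, in which case `s1 * s2` is
hyperbolic. -/
theorem statement8 {G V : Type*} [Group G] [MulAction G V] (T : SimpleGraph V)
    (hT : T.IsTree) (hAct : ActsByAut G T) (hNoInv : NoEdgeInversion G T)
    (S : Finset G) (hgen : Subgroup.closure (S : Set G) = ⊤)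
    (hnofix : ¬ ∃ v : V, ∀ g : G, g • v = v) :
    (∃ s ∈ S, IsHyperbolic V s) ∨
      (∃ s1 ∈ S, ∃ s2 ∈ S, IsElliptic V s1 ∧ IsElliptic V s2 ∧
        Fixed V s1 ∩ Fixed V s2 = (∅ : Set V) ∧ IsHyperbolic V (s1 * s2)) :=
  statement8_general T hT hAct S hgen hnofix
end

section
/- Let G be a group acting k-acylindrically and without edge inversions on a simplicial tree T, where k is a nonnegative integer, and let h1, h2 ∈ G be hyperbolic elements such that the intersection J = Axis(h1) ∩ Axis(h2) has finite diameter d with d ≥ 3k+1. Then max{τ(h1), τ(h2)} > d/3. -/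
open SimpleGraph Pointwise

/-!
The diameter of the intersection `J` of the two axes is at most `τ(h₁) + τ(h₂) + k`; the theorem
follows by comparing this with `3k + 1 ≤ d`. Suppose that `x, y ∈ J` realize a larger diameter.
After replacing each `hᵢ` by its inverse if necessary, both translate the geodesic from `x` to `y`
towards `y`, so `h₁h₂` and `h₂h₁` agree on its initial part of length `d - τ(h₁) - τ(h₂) > k`. By
acylindricity `h₁` and `h₂` commute. Hence `h₁` preserves `J`, and `h₁ • y` is a point of `J` whose
distance from `x` exceeds `d`.
-/

section Graph

variable {V : Type*} {T : SimpleGraph V} {x y : V}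

lemma dist_start_getVert {p : T.Walk x y} (hp : p.length = T.dist x y) {i : ℕ}
    (hi : i ≤ p.length) : T.dist x (p.getVert i) = i := by
  rw [← length_eq_dist_of_subwalk hp (p.isSubwalk_take i), Walk.take_length, min_eq_left hi]

lemma dist_getVert_end {p : T.Walk x y} (hp : p.length = T.dist x y) (i : ℕ) :
    T.dist (p.getVert i) y = p.length - i := by
  rw [← length_eq_dist_of_subwalk hp (p.isSubwalk_drop i), Walk.drop_length]

lemma exists_adj_dist_add_one_eq (hxy : T.dist x y ≠ 0) :
    ∃ q, T.Adj x q ∧ T.dist q y + 1 = T.dist x y := by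
  obtain ⟨p, hp⟩ := (Reachable.of_dist_ne_zero hxy).exists_walk_length_eq_dist
  refine ⟨p.getVert 1, ?_, ?_⟩
  · simpa only [Walk.getVert_zero] using p.adj_getVert_succ (i := 0) (by omega)
  · rw [dist_getVert_end hp]
    omega

lemma dist_le_setDiam {S : Set V} (hx : x ∈ S) (hy : y ∈ S) :
    (T.dist x y : ℕ∞) ≤ setDiam T S :=
  le_iSup₂_of_le x hx (le_iSup₂_of_le (f := fun w _ ↦ (T.dist x w : ℕ∞)) y hy le_rfl)

lemma exists_dist_eq_of_setDiam_eq {S : Set V} {d : ℕ} (hS : setDiam T S = d) (hd : 0 < d) :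
    ∃ x ∈ S, ∃ y ∈ S, T.dist x y = d := by
  have hlt : ((d - 1 : ℕ) : ℕ∞) < setDiam T S := by
    rw [hS, Nat.cast_lt]
    omega
  simp only [setDiam, lt_iSup_iff, Nat.cast_lt] at hlt
  obtain ⟨x, hx, y, hy, hxy⟩ := hlt
  have hle : T.dist x y ≤ d := by exact_mod_cast hS ▸ dist_le_setDiam hx hy
  exact ⟨x, hx, y, hy, by omega⟩

end Graph

section Tree

variable {V : Type*} {T : SimpleGraph V} (hT : T.IsTree)
include hT

lemma eq_of_adj_of_dist_add_one_eq {a b c z : V} (hb : T.Adj a b) (hc : T.Adj a c)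
    (hbz : T.dist b z + 1 = T.dist a z) (hcz : T.dist c z + 1 = T.dist a z) : b = c := by
  obtain ⟨p, hp⟩ := hT.connected.exists_walk_length_eq_dist b z
  obtain ⟨q, hq⟩ := hT.connected.exists_walk_length_eq_dist c z
  have hbp : (p.cons hb).IsPath :=
    Walk.isPath_of_length_eq_dist _ (by rw [Walk.length_cons, hp, hbz])
  have hcq : (q.cons hc).IsPath :=
    Walk.isPath_of_length_eq_dist _ (by rw [Walk.length_cons, hq, hcz])
  simpa using congrArg Walk.snd ((hT.existsUnique_path a z).unique hbp hcq)

lemma dist_eq_dist_add_one_of_adj_left (z : V) {v w : V} (h : T.Adj v w) :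
    T.dist v z = T.dist w z + 1 ∨ T.dist w z = T.dist v z + 1 := by
  simpa only [T.dist_comm (u := z)] using hT.dist_eq_dist_add_one_of_adj z h

lemma dist_eq_dist_add_dist_of_adj {w q x z : V} (hwq : T.Adj w q)
    (hx : T.dist q x + 1 = T.dist w x) (hz : T.dist w z + 1 = T.dist q z) :
    T.dist x z = T.dist w x + T.dist w z := by
  induction hn : T.dist q x generalizing w q with
  | zero =>
    obtain rfl : q = x := hT.connected.dist_eq_zero_iff.1 hn
    omega
  | succ n ih =>
    obtain ⟨r, hqr, hrx⟩ := exists_adj_dist_add_one_eq (T := T) (x := q) (y := x) (by omega)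
    rcases dist_eq_dist_add_one_of_adj_left hT z hqr with h | h
    · obtain rfl : w = r := eq_of_adj_of_dist_add_one_eq hT hwq.symm hqr hz h.symm
      omega
    · have hqxz := ih hqr hrx h.symm (by omega)
      omega

/- Gromov's four-point condition with `δ = 0`. The induction moves `a` one step towards `c`: while
both `b` and `d` get closer both sides drop by one, and otherwise `a` lies on one of the geodesics
between `b`, `c` and `d`. -/
lemma dist_add_dist_le_max (a b c d : V) :
    T.dist a b + T.dist c d ≤ max (T.dist a c + T.dist b d) (T.dist a d + T.dist b c) := by
  induction hn : T.dist a c generalizing a with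
  | zero =>
    obtain rfl : a = c := hT.connected.dist_eq_zero_iff.1 hn
    rw [T.dist_comm (u := b) (v := a)]
    omega
  | succ n ih =>
    obtain ⟨q, haq, hqc⟩ := exists_adj_dist_add_one_eq (T := T) (x := a) (y := c) (by omega)
    have hstep := ih q (by omega)
    have hcad : T.dist c d ≤ T.dist a c + T.dist a d := by
      rw [T.dist_comm (u := a) (v := c)]
      exact hT.connected.dist_triangle
    rcases dist_eq_dist_add_one_of_adj_left hT b haq with hb | hb <;>
      rcases dist_eq_dist_add_one_of_adj_left hT d haq with hd | hd
    · omega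
    · have hcd := dist_eq_dist_add_dist_of_adj hT haq hqc hd.symm
      have hbd := dist_eq_dist_add_dist_of_adj hT haq hb.symm hd.symm
      omega
    · have hcb := dist_eq_dist_add_dist_of_adj hT haq hqc hb.symm
      rw [T.dist_comm (u := c) (v := b)] at hcb
      omega
    · have hcb := dist_eq_dist_add_dist_of_adj hT haq hqc hb.symm
      have hcd := dist_eq_dist_add_dist_of_adj hT haq hqc hd.symm
      rw [T.dist_comm (u := c) (v := b)] at hcb
      omega

lemma eq_of_dist_add_dist_eq {x y a b : V} (ha : T.dist x a + T.dist a y = T.dist x y)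
    (hb : T.dist x b + T.dist b y = T.dist x y) (hab : T.dist x a = T.dist x b) : a = b := by
  have hfour := dist_add_dist_le_max hT x y a b
  rw [T.dist_comm (u := y) (v := a), T.dist_comm (u := y) (v := b)] at hfour
  exact hT.connected.dist_eq_zero_iff.1 (by omega)

end Tree

section Action

variable {G V : Type*} [Group G] [MulAction G V] {T : SimpleGraph V} {g h : G} {x y : V}

lemma dist_smul_smul (hAct : ActsByAut G T) (g : G) (v w : V) :
    T.dist (g • v) (g • w) = T.dist v w := by
  have hle (g : G) (v w : V) : T.edist (g • v) (g • w) ≤ T.edist v w := by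
    refine le_iInf fun p ↦ ?_
    let f : T →g T := ⟨(g • ·), hAct g _ _⟩
    exact (edist_le (p.map f)).trans_eq (by rw [Walk.length_map])
  have hge : T.edist v w ≤ T.edist (g • v) (g • w) := by
    simpa only [inv_smul_smul] using hle g⁻¹ (g • v) (g • w)
  exact congrArg ENat.toNat ((hle g v w).antisymm hge)

lemma transLen_le_dist (T : SimpleGraph V) (g : G) (v : V) : transLen T g ≤ T.dist v (g • v) :=
  ciInf_le' _ v

lemma transLen_pos_of_mem_axis (hT : T.Connected) (hh : IsHyperbolic V h) (hx : x ∈ Axis T h) :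
    0 < transLen T h := by
  have hx : T.dist x (h • x) = transLen T h := hx
  rw [← hx]
  exact hT.pos_dist_of_ne fun hfix ↦ hh ⟨x, hfix.symm⟩

lemma smul_mem_axis_of_commute (hAct : ActsByAut G T) (hgh : Commute g h) (hx : x ∈ Axis T h) :
    g • x ∈ Axis T h := by
  change T.dist (g • x) (h • g • x) = transLen T h
  rw [← mul_smul, ← hgh.eq, mul_smul, dist_smul_smul hAct]
  exact hx

lemma AcylindricalAction.eq_of_smul_eq {k : ℕ} (hAcyl : AcylindricalAction T G k)
    (hx : g • x = h • x) (hy : g • y = h • y) (hxy : k < T.dist x y) : g = h := by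
  have hfix {v : V} (hv : g • v = h • v) : v ∈ Fixed V (h⁻¹ * g) := by
    change (h⁻¹ * g) • v = v
    rw [mul_smul, hv, inv_smul_smul]
  by_contra hne
  have hdiam : setDiam T (Fixed V (h⁻¹ * g)) ≤ k :=
    hAcyl _ (fun hone ↦ hne (inv_mul_eq_one.1 hone).symm) ⟨x, hfix hx⟩
  have hle : T.dist x y ≤ k := by exact_mod_cast (dist_le_setDiam (hfix hx) (hfix hy)).trans hdiam
  omega

/-- `g` translates the geodesic from `x` to `y` by `n` in the direction from `x` to `y`: both
endpoints move by `n`, and `g • y` lies beyond `y` as seen from `x`. -/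
structure ShiftsSegment (T : SimpleGraph V) (g : G) (x y : V) (n : ℕ) : Prop where
  dist_left : T.dist x (g • x) = n
  dist_right : T.dist y (g • y) = n
  dist_smul : T.dist x (g • y) = T.dist x y + n

namespace ShiftsSegment

variable {m n : ℕ}

lemma inv (hAct : ActsByAut G T) (hg : ShiftsSegment T g y x n) : ShiftsSegment T g⁻¹ x y n where
  dist_left := by rw [← dist_smul_smul hAct g, smul_inv_smul, T.dist_comm, hg.dist_right]
  dist_right := by rw [← dist_smul_smul hAct g, smul_inv_smul, T.dist_comm, hg.dist_left]
  dist_smul := by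
    rw [← dist_smul_smul hAct g, smul_inv_smul, T.dist_comm, hg.dist_smul, T.dist_comm]

lemma smul_getVert (hT : T.IsTree) (hAct : ActsByAut G T) (hg : ShiftsSegment T g x y n)
    {p : T.Walk x y} (hp : p.length = T.dist x y) {i : ℕ} (hi : i + n ≤ p.length) :
    g • p.getVert i = p.getVert (i + n) := by
  obtain ⟨hleft, hright, hsmul⟩ := hg
  have hxi := dist_smul_smul hAct g x (p.getVert i)
  have hiy := dist_smul_smul hAct g (p.getVert i) y
  rw [dist_start_getVert hp (by omega)] at hxi
  rw [dist_getVert_end hp] at hiy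
  have hxin := dist_start_getVert hp hi
  have hiny := dist_getVert_end hp (i + n)
  have hx_le := hT.connected.dist_triangle (u := x) (v := g • x) (w := g • p.getVert i)
  have hgi_le := hT.connected.dist_triangle (u := x) (v := g • p.getVert i) (w := g • y)
  have hy_le := hT.connected.dist_triangle (u := p.getVert (i + n)) (v := y) (w := g • y)
  have hin_le := hT.connected.dist_triangle (u := x) (v := p.getVert (i + n)) (w := g • y)
  exact eq_of_dist_add_dist_eq hT (x := x) (y := g • y) (by omega) (by omega) (by omega)

/- Both `g * h` and `h * g` shift the initial part of the segment by `m + n`. -/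
lemma commute (hT : T.IsTree) (hAct : ActsByAut G T) {k : ℕ} (hAcyl : AcylindricalAction T G k)
    (hg : ShiftsSegment T g x y m) (hh : ShiftsSegment T h x y n)
    (hlt : m + n + k < T.dist x y) : Commute g h := by
  obtain ⟨p, hp⟩ := hT.connected.exists_walk_length_eq_dist x y
  have hagree {i : ℕ} (hi : i + m + n ≤ p.length) :
      (g * h) • p.getVert i = (h * g) • p.getVert i := by
    rw [mul_smul, mul_smul, hh.smul_getVert hT hAct hp (by omega),
      hg.smul_getVert hT hAct hp (by omega), hg.smul_getVert hT hAct hp (by omega),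
      hh.smul_getVert hT hAct hp (by omega), add_right_comm]
  have hstart : (g * h) • x = (h * g) • x := by
    simpa only [Walk.getVert_zero] using hagree (i := 0) (by omega)
  refine hAcyl.eq_of_smul_eq hstart (hagree (i := p.length - m - n) (by omega)) ?_
  rw [dist_start_getVert hp (by omega)]
  omega

end ShiftsSegment

/- If `q` is the neighbour of `x` on the way to `y`, then minimality of `d(x, h • x)` among all
displacements forces `q` and `h • x` to lie, in this order, between `x` and `h • q`. -/
lemma dist_smul_eq_dist_add_transLen (hT : T.IsTree) (hAct : ActsByAut G T)
    (hx : x ∈ Axis T h) (hy : y ∈ Axis T h) (hlt : transLen T h < T.dist x y)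
    (hle : T.dist y (h • x) ≤ T.dist x (h • y)) :
    T.dist x (h • y) = T.dist x y + transLen T h := by
  have hx : T.dist x (h • x) = transLen T h := hx
  have hy : T.dist y (h • y) = transLen T h := hy
  rcases Nat.eq_zero_or_pos (transLen T h) with hzero | hpos
  · rw [hzero, ← hT.connected.dist_eq_zero_iff.1 (hy.trans hzero), add_zero]
  obtain ⟨q, hxq, hqy⟩ := exists_adj_dist_add_one_eq (T := T) (x := x) (y := y) (by omega)
  have hq : transLen T h ≤ T.dist q (h • q) := transLen_le_dist T h q
  have hhxy := dist_smul_smul hAct h x y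
  have hhqy := dist_smul_smul hAct h q y
  have hxq_one : T.dist x q = 1 := dist_eq_one_iff_adj.2 hxq
  have hhxq_one : T.dist (h • x) (h • q) = 1 := dist_eq_one_iff_adj.2 (hAct h _ _ hxq)
  have hsum : T.dist x (h • y) + T.dist y (h • x) = 2 * T.dist x y := by
    have hlower := dist_add_dist_le_max hT x y (h • x) (h • y)
    have hupper := dist_add_dist_le_max hT x (h • y) y (h • x)
    grind [SimpleGraph.dist_comm]
  have hqhx : T.dist q (h • x) + 1 = transLen T h := by
    have hstep := dist_eq_dist_add_one_of_adj_left hT (h • x) hxq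
    have hfour := dist_add_dist_le_max hT x y q (h • x)
    grind [SimpleGraph.dist_comm]
  have hxhq : T.dist x (h • q) = transLen T h + 1 := by
    have hstep := hT.dist_eq_dist_add_one_of_adj x (hAct h _ _ hxq)
    have hfour := dist_add_dist_le_max hT x (h • x) q (h • q)
    have htri := hT.connected.dist_triangle (u := x) (v := h • q) (w := h • y)
    grind [SimpleGraph.dist_comm]
  have hfour := dist_add_dist_le_max hT x (h • q) (h • x) (h • y)
  have htri := hT.connected.dist_triangle (u := x) (v := y) (w := h • y)
  grind [SimpleGraph.dist_comm]

lemma exists_shiftsSegment_of_mem_axis (hT : T.IsTree) (hAct : ActsByAut G T)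
    (hx : x ∈ Axis T h) (hy : y ∈ Axis T h) (hlt : transLen T h < T.dist x y) :
    ∃ g, (g = h ∨ g = h⁻¹) ∧ ShiftsSegment T g x y (transLen T h) := by
  rcases le_total (T.dist y (h • x)) (T.dist x (h • y)) with hle | hle
  · exact ⟨h, .inl rfl, hx, hy, dist_smul_eq_dist_add_transLen hT hAct hx hy hlt hle⟩
  · rw [SimpleGraph.dist_comm] at hlt
    have hyx : ShiftsSegment T h y x (transLen T h) :=
      ⟨hy, hx, dist_smul_eq_dist_add_transLen hT hAct hy hx hlt hle⟩
    exact ⟨h⁻¹, .inr rfl, hyx.inv hAct⟩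

lemma commute_of_transLen_add_lt_dist (hT : T.IsTree) (hAct : ActsByAut G T) {k : ℕ}
    (hAcyl : AcylindricalAction T G k) (hx : x ∈ Axis T g ∩ Axis T h) (hy : y ∈ Axis T g ∩ Axis T h)
    (hlt : transLen T g + transLen T h + k < T.dist x y) : Commute g h := by
  obtain ⟨a, ha, hshift_a⟩ := exists_shiftsSegment_of_mem_axis hT hAct hx.1 hy.1 (by omega)
  obtain ⟨b, hb, hshift_b⟩ := exists_shiftsSegment_of_mem_axis hT hAct hx.2 hy.2 (by omega)
  have hab : Commute a b := hshift_a.commute hT hAct hAcyl hshift_b hlt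
  rcases ha with rfl | rfl <;> rcases hb with rfl | rfl <;> simpa using hab

end Action

theorem statement13_general {G V : Type*} [Group G] [MulAction G V] (T : SimpleGraph V)
    (hT : T.IsTree) (hAct : ActsByAut G T) (k : ℕ) (hAcyl : AcylindricalAction T G k)
    (h1 h2 : G) (hh1 : IsHyperbolic V h1)
    (d : ℕ) (hd : setDiam T (Axis T h1 ∩ Axis T h2) = (d : ℕ∞)) :
    d ≤ transLen T h1 + transLen T h2 + k := by
  by_contra! hlt
  obtain ⟨x, hx, y, hy, hxy⟩ := exists_dist_eq_of_setDiam_eq hd (by omega)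
  have hcomm : Commute h1 h2 :=
    commute_of_transLen_add_lt_dist hT hAct hAcyl hx hy (hxy ▸ hlt)
  obtain ⟨g, hg, hshift⟩ := exists_shiftsSegment_of_mem_axis hT hAct hx.1 hy.1 (by omega)
  have hg1 : Commute g h1 := by rcases hg with rfl | rfl <;> simp
  have hg2 : Commute g h2 := by rcases hg with rfl | rfl <;> simpa using hcomm
  have hgy : g • y ∈ Axis T h1 ∩ Axis T h2 :=
    ⟨smul_mem_axis_of_commute hAct hg1 hy.1, smul_mem_axis_of_commute hAct hg2 hy.2⟩
  have hle : T.dist x (g • y) ≤ d := by exact_mod_cast hd ▸ dist_le_setDiam hx hgy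
  have hpos := transLen_pos_of_mem_axis hT.connected hh1 hx.1
  have hfar := hshift.dist_smul
  omega

/-- If `G` acts `k`-acylindrically without edge inversions on a simplicial
tree and `h1, h2` are hyperbolic with `J = Axis(h1) ∩ Axis(h2)` of finite diameter
`d ≥ 3k + 1`, then `max{τ(h1), τ(h2)} > d / 3`. -/
theorem statement13 {G V : Type*} [Group G] [MulAction G V] (T : SimpleGraph V)
    (hT : T.IsTree) (hAct : ActsByAut G T) (hNoInv : NoEdgeInversion G T)
    (k : ℕ) (hAcyl : AcylindricalAction T G k)
    (h1 h2 : G) (hh1 : IsHyperbolic V h1) (hh2 : IsHyperbolic V h2)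
    (d : ℕ) (hd : setDiam T (Axis T h1 ∩ Axis T h2) = (d : ℕ∞))
    (hdk : 3 * k + 1 ≤ d) :
    (d : ℝ) / 3 < (max (transLen T h1) (transLen T h2) : ℝ) := by
  have hle := statement13_general T hT hAct k hAcyl h1 h2 hh1 d hd
  rw [div_lt_iff₀' three_pos]
  exact_mod_cast (by omega : d < 3 * max (transLen T h1) (transLen T h2))
end
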